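/- Let D be an essentially very large effective divisor on a nonsingular projective variety X, both defined over K, and let V ⊆ L(D) be a linear subspace witnessing essential very largeness. Then there exists a finite subset J of V such that for every P ∈ Supp D(K̄) there exists a subset I ⊆ J which is a basis of V and satisfies ord_E ∏_{f∈I} f > 0 for every irreducible component E of D with P ∈ E(K̄). -/

import Mathlib

open scoped BigOperators

/-- Abstract interface for a nonsingular projective variety defined over `K`:
`Point` is the set of points of `X` over the algebraic closure `K̄`, `Prime` the set of
prime divisors of `X` (the irreducible codimension-one subvarieties), `F` the field of
rational functions of `X` (an extension of `K`), `ord E f` the order of vanishing of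
the nonzero rational function `f` along the prime divisor `E`, and `memPt P E` the
incidence relation "the point `P` lies on `E(K̄)`"; `dim` is the dimension of `X`. -/
structure AbstractVariety (K : Type) [Field K] : Type 1 where
  Point : Type
  Prime : Type
  F : Type
  fieldF : Field F
  algF : Algebra K F
  ord : Prime → F → ℤ
  memPt : Point → Prime → Prop
  dim : ℕ

attribute [instance] AbstractVariety.fieldF AbstractVariety.algF

namespace AbstractVariety

variable {K : Type} [Field K] (X : AbstractVariety K)

/-- An effective divisor on `X`: a finitely supported assignment of multiplicities in
`ℕ` to the prime divisors.  An irreducible component of `D` is a prime divisor `E`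
with `D E > 0`. -/
abbrev Div := X.Prime →₀ ℕ

/-- The point `P` lies in the support `D(K̄)` of the effective divisor `D`. -/
def inSupp (D : X.Div) (P : X.Point) : Prop := ∃ E, 0 < D E ∧ X.memPt P E

/-- Membership in the Riemann–Roch space
`L(D) = {f rational function on X | div(f) ≥ -D} ∪ {0}`. -/
def memL (D : X.Div) (f : X.F) : Prop := f = 0 ∨ ∀ E, -(D E : ℤ) ≤ X.ord E f

/-- `B` is a (finite) basis of the `K`-vector space `L(D)`: a linearly independent
subset of `L(D)` which spans `L(D)`. -/
def IsBasisOfL (D : X.Div) (B : Finset X.F) : Prop :=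
  (∀ f ∈ B, X.memL D f) ∧ LinearIndependent (ι := (B : Set X.F)) K Subtype.val ∧
    ∀ f, X.memL D f → f ∈ Submodule.span K (B : Set X.F)

/-- `B` is a (finite) basis of the subspace `V`. -/
def IsBasisOf (V : Submodule K X.F) (B : Finset X.F) : Prop :=
  (B : Set X.F) ⊆ (V : Set X.F) ∧ LinearIndependent (ι := (B : Set X.F)) K Subtype.val ∧
    Submodule.span K (B : Set X.F) = V

/-- Levin's definition: `D` is *very large* if for every `P ∈ D(K̄)` there exists a
basis `B` of `L(D)` such that `ord_E ∏_{f ∈ B} f > 0` for every irreducible component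
`E` of `D` with `P ∈ E(K̄)`. -/
def IsVeryLarge (D : X.Div) : Prop :=
  ∀ P : X.Point, X.inSupp D P → ∃ B : Finset X.F, X.IsBasisOfL D B ∧
    ∀ E, 0 < D E → X.memPt P E → 0 < X.ord E (∏ f ∈ B, f)

/-- `D` is *large* if it has the same support as some very large divisor. -/
def IsLarge (D : X.Div) : Prop :=
  ∃ D' : X.Div, (∀ E, 0 < D E ↔ 0 < D' E) ∧ X.IsVeryLarge D'

/-- `D` is *essentially very large* if there exists a linear subspace `V` of `L(D)`
such that for every `P ∈ D(K̄)` there exists a basis `B` of `V` such that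
`ord_E ∏_{f ∈ B} f > 0` for every irreducible component `E` of `D` with `P ∈ E(K̄)`. -/
def IsEssentiallyVeryLarge (D : X.Div) : Prop :=
  ∃ V : Submodule K X.F, (∀ f ∈ V, X.memL D f) ∧
    ∀ P : X.Point, X.inSupp D P → ∃ B : Finset X.F, X.IsBasisOf V B ∧
      ∀ E, 0 < D E → X.memPt P E → 0 < X.ord E (∏ f ∈ B, f)

/-- `D` is *essentially large* if it has the same support as some essentially very
large divisor. -/
def IsEssentiallyLarge (D : X.Div) : Prop :=
  ∃ D' : X.Div, (∀ E, 0 < D E ↔ 0 < D' E) ∧ X.IsEssentiallyVeryLarge D'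

end AbstractVariety

/-! A point `P` enters the required condition only through the set of components of `D` passing
through `P`. Since `D` has finitely many components, only finitely many sets arise; one basis for
each of them suffices, and `J` is the union of these bases. -/

theorem exists_finset_forall_exists_subset {ι α : Type*} {s : Set ι} (hs : s.Finite) {A : Set α}
    {p : ι → Finset α → Prop} (h : ∀ i ∈ s, ∃ B : Finset α, (B : Set α) ⊆ A ∧ p i B) :
    ∃ J : Finset α, (J : Set α) ⊆ A ∧ ∀ i ∈ s, ∃ I ⊆ J, p i I := by
  classical
  choose! B hBA hB using h
  refine ⟨hs.toFinset.biUnion B, ?_, fun i hi => ⟨B i, ?_, hB i hi⟩⟩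
  · simpa only [Finset.coe_biUnion, hs.coe_toFinset, Set.iUnion₂_subset_iff] using hBA
  · exact Finset.subset_biUnion_of_mem B (hs.mem_toFinset.mpr hi)

namespace AbstractVariety

variable {K : Type} [Field K] (X : AbstractVariety K)

/-- The irreducible components of `D` passing through `P`: all that the positivity condition at
`P` depends on. -/
def componentsThrough (D : X.Div) (P : X.Point) : Set X.Prime :=
  {E | 0 < D E ∧ X.memPt P E}

theorem finite_range_componentsThrough (D : X.Div) :
    (Set.range (X.componentsThrough D)).Finite := by
  refine D.support.finite_toSet.finite_subsets.subset ?_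
  rintro _ ⟨P, rfl⟩ E ⟨hE, -⟩
  exact Finsupp.mem_support_iff.mpr hE.ne'

/-- `B` is a basis of `V` whose product has positive order along every prime divisor in `S`; the
condition on bases in the definition of essential very largeness, with an arbitrary set `S` in place
of the components through a point. -/
def IsBasisVanishingAlong (V : Submodule K X.F) (S : Set X.Prime) (B : Finset X.F) : Prop :=
  X.IsBasisOf V B ∧ ∀ E ∈ S, 0 < X.ord E (∏ f ∈ B, f)

theorem isBasisVanishingAlong_componentsThrough_iff {V : Submodule K X.F} {D : X.Div}
    {P : X.Point} {B : Finset X.F} :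
    X.IsBasisVanishingAlong V (X.componentsThrough D P) B ↔
      X.IsBasisOf V B ∧ ∀ E, 0 < D E → X.memPt P E → 0 < X.ord E (∏ f ∈ B, f) :=
  and_congr_right' (forall_congr' fun _ => and_imp)

end AbstractVariety

theorem finite_family_of_bases_general {K : Type} [Field K] (X : AbstractVariety K) (D : X.Div)
    (V : Submodule K X.F)
    (hwitness : ∀ P : X.Point, X.inSupp D P → ∃ B : Finset X.F, X.IsBasisOf V B ∧
      ∀ E, 0 < D E → X.memPt P E → 0 < X.ord E (∏ f ∈ B, f)) :
    ∃ J : Finset X.F, (J : Set X.F) ⊆ (V : Set X.F) ∧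
      ∀ P : X.Point, X.inSupp D P → ∃ I : Finset X.F, I ⊆ J ∧ X.IsBasisOf V I ∧
        ∀ E, 0 < D E → X.memPt P E → 0 < X.ord E (∏ f ∈ I, f) := by
  simp only [← X.isBasisVanishingAlong_componentsThrough_iff] at hwitness ⊢
  have hfinite : (X.componentsThrough D '' {P | X.inSupp D P}).Finite :=
    (X.finite_range_componentsThrough D).subset (Set.image_subset_range _ _)
  have hbasis : ∀ S ∈ X.componentsThrough D '' {P | X.inSupp D P},
      ∃ B : Finset X.F, (B : Set X.F) ⊆ V ∧ X.IsBasisVanishingAlong V S B := by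
    rintro _ ⟨P, hP, rfl⟩
    obtain ⟨B, hB⟩ := hwitness P hP
    exact ⟨B, hB.1.1, hB⟩
  obtain ⟨J, hJV, hJ⟩ := exists_finset_forall_exists_subset hfinite hbasis
  exact ⟨J, hJV, fun P hP => hJ _ (Set.mem_image_of_mem _ hP)⟩

/-- Let `D` be an essentially very large effective divisor on a
nonsingular projective variety `X`, both defined over `K` (a number field or `ℂ`), and
let `V ⊆ L(D)` be a linear subspace witnessing essential very largeness.  Then there
exists a finite subset `J` of `V` such that for every `P ∈ Supp D(K̄)` there exists a
subset `I ⊆ J` which is a basis of `V` and satisfies `ord_E ∏_{f ∈ I} f > 0` for every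
irreducible component `E` of `D` with `P ∈ E(K̄)`. -/
theorem finite_family_of_bases (K : Type) [Field K]
    (hK : NumberField K ∨ Nonempty (K ≃+* ℂ))
    (X : AbstractVariety K) (D : X.Div) (V : Submodule K X.F)
    (hV : ∀ f ∈ V, X.memL D f)
    (hwitness : ∀ P : X.Point, X.inSupp D P → ∃ B : Finset X.F, X.IsBasisOf V B ∧
      ∀ E, 0 < D E → X.memPt P E → 0 < X.ord E (∏ f ∈ B, f)) :
    ∃ J : Finset X.F, (J : Set X.F) ⊆ (V : Set X.F) ∧
      ∀ P : X.Point, X.inSupp D P → ∃ I : Finset X.F, I ⊆ J ∧ X.IsBasisOf V I ∧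
        ∀ E, 0 < D E → X.memPt P E → 0 < X.ord E (∏ f ∈ I, f) :=
  finite_family_of_bases_general X D V hwitness
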